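/- Let $C$ be an $[n,k,d]$ linear code with $h$-level hierarchical locality with parameters $[(r_1,\delta_1),\ldots,(r_h,\delta_h)]$. Then $d \leq n - k + 1 - \sum_{\ell=1}^{h-1}(\lceil k/r_\ell \rceil - 1)(\delta_\ell - \delta_{\ell+1}) - (\lceil k/r_h \rceil - 1)(\delta_h - 1)$. -/

import Mathlib

open Finset

variable (F : Type*) [Field F] [DecidableEq F] (n : ℕ)

/-- The linear map restricting a word of length `n` to the coordinates in `S`
(setting the remaining coordinates to zero). -/
def puncProj (S : Finset (Fin n)) : (Fin n → F) →ₗ[F] (Fin n → F) where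
  toFun c := fun j => if j ∈ S then c j else 0
  map_add' x y := by funext j; by_cases h : j ∈ S <;> simp [h]
  map_smul' a x := by funext j; by_cases h : j ∈ S <;> simp [h]

/-- The punctured code of `C` obtained by restricting to the coordinate set `S`. -/
def puncture (C : Submodule F (Fin n → F)) (S : Finset (Fin n)) :
    Submodule F (Fin n → F) :=
  C.map (puncProj F n S)

/-- `C` has all-symbol `(r,δ)`-locality: every coordinate in the support of `C`
lies in the support of a punctured code of dimension at most `r` and minimum
distance at least `δ`. -/
def HasLocality (C : Submodule F (Fin n → F)) (r δ : ℕ) : Prop :=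
  ∀ i : Fin n, (∃ c ∈ C, c i ≠ 0) →
    ∃ S : Finset (Fin n),
      (∃ c ∈ puncture F n C S, c i ≠ 0) ∧
      Module.finrank F ↥(puncture F n C S) ≤ r ∧
      ∀ c ∈ puncture F n C S, c ≠ 0 → δ ≤ hammingNorm c

/-- `d` is the minimum Hamming distance of the linear code `C`. -/
def IsMinDist (C : Submodule F (Fin n → F)) (d : ℕ) : Prop :=
  (∃ c ∈ C, c ≠ 0 ∧ hammingNorm c = d) ∧ ∀ c ∈ C, c ≠ 0 → d ≤ hammingNorm c

/-- `C` has `h`-level hierarchical locality with the given list of locality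
parameters `[(r₁,δ₁),…,(r_h,δ_h)]`. -/
def HasHierLocality (C : Submodule F (Fin n → F)) : List (ℕ × ℕ) → Prop
  | [] => True
  | (r, δ) :: rest =>
      ∀ i : Fin n, (∃ c ∈ C, c i ≠ 0) →
        ∃ S : Finset (Fin n),
          (∃ c ∈ puncture F n C S, c i ≠ 0) ∧
          Module.finrank F ↥(puncture F n C S) ≤ r ∧
          (∀ c ∈ puncture F n C S, c ≠ 0 → δ ≤ hammingNorm c) ∧
          HasHierLocality (puncture F n C S) rest

section HierAux

variable {F n}

def hierHd : List (ℕ × ℕ) → ℤ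
  | [] => 1
  | p :: _ => p.2

def hierF : List (ℕ × ℕ) → ℤ → ℤ
  | [], _ => 0
  | p :: L, x => (⌈(x : ℚ) / (p.1 : ℚ)⌉ - 1) * ((p.2 : ℤ) - hierHd L) + hierF L x

def hierGood : List (ℕ × ℕ) → Prop
  | [] => True
  | p :: L => 0 < p.1 ∧ hierHd L ≤ (p.2 : ℤ) ∧ hierGood L

theorem hierF_add (L : List (ℕ × ℕ)) (hL : hierGood L) (x y : ℤ) :
    hierF L (x + y) ≤ hierF L x + hierF L y + (hierHd L - 1) := by
  induction L with
  | nil => simp [hierF, hierHd]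
  | cons p L ih =>
    obtain ⟨h1, h2, h3⟩ := hL
    have h4 := ih h3
    have h5 : ⌈((x + y : ℤ) : ℚ) / (p.1 : ℚ)⌉ ≤ ⌈(x : ℚ) / (p.1 : ℚ)⌉ + ⌈(y : ℚ) / (p.1 : ℚ)⌉ := by
      push_cast
      rw [add_div]
      exact Int.ceil_add_le _ _
    have h6 : (0 : ℤ) ≤ (p.2 : ℤ) - hierHd L := by linarith
    have h7 := mul_le_mul_of_nonneg_right h5 h6
    have e : hierHd (p :: L) = (p.2 : ℤ) := rfl
    rw [e]
    simp only [hierF]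
    linarith

theorem hierF_small (p : ℕ × ℕ) (L : List (ℕ × ℕ)) (x : ℤ) (hx : 0 < x) (hxr : x ≤ p.1) :
    hierF (p :: L) x = hierF L x := by
  have : ⌈(x : ℚ) / (p.1 : ℚ)⌉ = 1 := by
    have hp : (0 : ℚ) < p.1 := by
      have : (0 : ℤ) < p.1 := by linarith
      exact_mod_cast this
    rw [Int.ceil_eq_iff]
    constructor
    · have : (0 : ℚ) < x := by exact_mod_cast hx
      simpa using div_pos this hp
    · rw [div_le_iff₀ hp]
      simpa using (by exact_mod_cast hxr : (x : ℚ) ≤ p.1)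
  simp [hierF, this]

/-- rank function -/
noncomputable def rk (C : Submodule F (Fin n → F)) (S : Finset (Fin n)) : ℕ :=
  Module.finrank F ↥(puncture F n C S)

/-- shortened code -/
def kr (C : Submodule F (Fin n → F)) (S : Finset (Fin n)) : Submodule F (Fin n → F) :=
  C ⊓ LinearMap.ker (puncProj F n S)

theorem mem_kr (C : Submodule F (Fin n → F)) (S : Finset (Fin n)) (c : Fin n → F) :
    c ∈ kr C S ↔ c ∈ C ∧ ∀ i ∈ S, c i = 0 := by
  simp only [kr, Submodule.mem_inf, LinearMap.mem_ker, puncProj, LinearMap.coe_mk, AddHom.coe_mk,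
    funext_iff]
  simp

theorem rk_add_kr (C : Submodule F (Fin n → F)) (S : Finset (Fin n)) :
    rk C S + Module.finrank F ↥(kr C S) = Module.finrank F ↥C := by
  have h := LinearMap.finrank_range_add_finrank_ker ((puncProj F n S).domRestrict C)
  rw [LinearMap.range_domRestrict] at h
  have e : LinearMap.ker ((puncProj F n S).domRestrict C)
      = (kr C S).comap C.subtype := by
    ext x
    simp [kr]
  rw [e] at h
  have e2 : Module.finrank F ↥((kr C S).comap C.subtype) = Module.finrank F ↥(kr C S) := (Submodule.comapSubtypeEquivOfLe (inf_le_left : kr C S ≤ C)).finrank_eq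
  rw [e2] at h
  exact h

theorem kr_anti (C : Submodule F (Fin n → F)) {S T : Finset (Fin n)} (h : S ⊆ T) :
    kr C T ≤ kr C S := by
  intro c hc
  rw [mem_kr] at hc ⊢
  exact ⟨hc.1, fun i hi => hc.2 i (h hi)⟩

theorem rk_mono (C : Submodule F (Fin n → F)) {S T : Finset (Fin n)} (h : S ⊆ T) :
    rk C S ≤ rk C T := by
  have h1 := rk_add_kr C S
  have h2 := rk_add_kr C T
  have h3 := Submodule.finrank_mono (kr_anti C h)
  omega

theorem rk_union (C : Submodule F (Fin n → F)) (S T : Finset (Fin n)) :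
    rk C (S ∪ T) ≤ rk C S + rk C T := by
  have h1 := rk_add_kr C S
  have h2 := rk_add_kr C T
  have h3 := rk_add_kr C (S ∪ T)
  have e : kr C (S ∪ T) = kr C S ⊓ kr C T := by
    ext c
    simp only [Submodule.mem_inf, mem_kr, Finset.mem_union]
    grind
  have h4 := Submodule.finrank_sup_add_finrank_inf_eq (kr C S) (kr C T)
  have h5 : Module.finrank F ↥(kr C S ⊔ kr C T) ≤ Module.finrank F ↥C :=
    Submodule.finrank_mono (sup_le inf_le_left inf_le_left)
  rw [← e] at h4
  omega

theorem rk_singleton (C : Submodule F (Fin n → F)) (i : Fin n) : rk C {i} ≤ 1 := by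
  have : puncture F n C {i} ≤ Submodule.span F {(Pi.single i 1 : Fin n → F)} := by
    rintro _ ⟨c, _, rfl⟩
    rw [Submodule.mem_span_singleton]
    refine ⟨c i, ?_⟩
    funext j
    by_cases h : j = i
    · subst h; simp [puncProj]
    · simp [puncProj, h]
  exact (Submodule.finrank_mono this).trans
    ((finrank_span_le_card _).trans (by simp))

theorem rk_insert (C : Submodule F (Fin n → F)) (i : Fin n) (T : Finset (Fin n)) :
    rk C (insert i T) ≤ rk C T + 1 := by
  have h1 := rk_union C {i} T
  have h2 := rk_singleton C i
  rw [Finset.insert_eq]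
  omega

theorem nullity_mono (C : Submodule F (Fin n → F)) {S T : Finset (Fin n)} (h : S ⊆ T) :
    (S.card : ℤ) - rk C S ≤ T.card - rk C T := by
  have aux : ∀ U : Finset (Fin n), rk C (U ∪ S) ≤ rk C S + U.card := by
    intro U
    induction U using Finset.induction_on with
    | empty => simp
    | insert a U ha ih =>
      have h2 := rk_insert C a (U ∪ S)
      rw [Finset.card_insert_of_notMem ha, Finset.insert_union]
      omega
  have h1 := aux (T \ S)
  rw [Finset.sdiff_union_of_subset h] at h1
  have h2 := Finset.card_sdiff_add_card_eq_card h
  omega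

theorem exists_word (C : Submodule F (Fin n → F)) {S T : Finset (Fin n)}
    (h : rk C T < rk C (T ∪ S)) : ∃ c ∈ C, (∀ i ∈ T, c i = 0) ∧ ∃ i ∈ S, c i ≠ 0 := by
  by_contra! hc
  have : kr C T ≤ kr C (T ∪ S) := by
    intro c hcc
    rw [mem_kr] at hcc ⊢
    refine ⟨hcc.1, fun i hi => ?_⟩
    rcases Finset.mem_union.mp hi with hi | hi
    · exact hcc.2 i hi
    · exact hc c hcc.1 hcc.2 i hi
  have h1 := rk_add_kr C T
  have h2 := rk_add_kr C (T ∪ S)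
  have h3 := Submodule.finrank_mono this
  omega

theorem rk_lt (C : Submodule F (Fin n → F)) {S T : Finset (Fin n)} (c : Fin n → F) (hc : c ∈ C)
    (hT : ∀ i ∈ T, c i = 0) (i : Fin n) (hi : i ∈ S) (hci : c i ≠ 0) :
    rk C T < rk C (T ∪ S) := by
  have : kr C (T ∪ S) < kr C T := by
    refine lt_of_le_of_ne (kr_anti C Finset.subset_union_left) fun e => ?_
    have h1 : c ∈ kr C T := (mem_kr _ _ _).2 ⟨hc, hT⟩
    rw [← e, mem_kr] at h1
    exact hci (h1.2 i (Finset.mem_union_right _ hi))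
  have h1 := rk_add_kr C T
  have h2 := rk_add_kr C (T ∪ S)
  have h3 := Submodule.finrank_lt_finrank_of_lt this
  omega

theorem nullity_step (C : Submodule F (Fin n → F)) (S T : Finset (Fin n)) (δ : ℕ)
    (hδ : ∀ c ∈ puncture F n C S, c ≠ 0 → δ ≤ hammingNorm c)
    (h : rk C T < rk C (T ∪ S)) :
    (T.card : ℤ) - rk C T + (δ - 1) ≤ (T ∪ S).card - rk C (T ∪ S) := by
  obtain ⟨W, hW, hmax⟩ := Finset.exists_max_image
    ((T ∪ S).powerset.filter fun W => T ⊆ W ∧ rk C W < rk C (T ∪ S)) Finset.card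
    ⟨T, Finset.mem_filter.2 ⟨Finset.mem_powerset.2 Finset.subset_union_left, subset_rfl, h⟩⟩
  simp only [Finset.mem_filter, Finset.mem_powerset] at hW hmax
  obtain ⟨hW1, hW2, hW3⟩ := hW
  have hWS : W ∪ S = T ∪ S := by
    ext i; have := @hW1 i; have := @hW2 i
    simp only [Finset.mem_union] at *
    tauto
  obtain ⟨c, hc, hc0, i, hi, hci⟩ := exists_word C (S := S) (T := W) (by rw [hWS]; exact hW3)
  have hiW : i ∉ W := fun hh => hci (hc0 i hh)
  have hr : rk C (T ∪ S) ≤ rk C W + 1 := by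
    refine le_trans ?_ (rk_insert C i W)
    by_contra! hlt
    have := hmax (insert i W) ⟨by grind, by grind, hlt⟩
    rw [Finset.card_insert_of_notMem hiW] at this
    omega
  have hw : δ ≤ hammingNorm (puncProj F n S c) := by
    refine hδ _ ⟨c, hc, rfl⟩ fun e => hci ?_
    have := congrFun e i
    simpa [puncProj, hi] using this
  have hsub : hammingNorm (puncProj F n S c) ≤ ((T ∪ S) \ W).card := by
    refine Finset.card_le_card fun j hj => ?_
    simp [puncProj] at hj
    grind
  have hcard := Finset.card_sdiff_add_card_eq_card hW1
  have hn := nullity_mono C hW2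
  omega

theorem punc_punc (C : Submodule F (Fin n → F)) (S S' : Finset (Fin n)) :
    puncture F n (puncture F n C S) S' = puncture F n C (S ∩ S') := by
  unfold puncture
  rw [← Submodule.map_comp]
  congr 1
  ext c j
  simp [puncProj]
  grind

theorem hier_key (C : Submodule F (Fin n → F)) (L : List (ℕ × ℕ)) (hL : hierGood L) :
    ∀ S, HasHierLocality F n (puncture F n C S) L → ∀ T, rk C T < rk C (T ∪ S) →
      ∃ T', T ⊆ T' ∧ T' ⊆ T ∪ S ∧ rk C T' < rk C (T ∪ S) ∧
        (T.card : ℤ) - rk C T + hierF L ((rk C (T ∪ S) : ℤ) - rk C T) ≤ T'.card - rk C T' := by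
  induction L with
  | nil =>
    intro S _ T hT
    exact ⟨T, subset_rfl, Finset.subset_union_left, hT, by simp [hierF]⟩
  | cons p L ih =>
    obtain ⟨r, δ⟩ := p
    intro S hS T
    have hgood := hL
    obtain ⟨hr, hδ, hL'⟩ := hL
    induction hm : rk C (T ∪ S) - rk C T using Nat.strong_induction_on generalizing T with
    | _ m IH =>
      intro hT
      obtain ⟨c, hc, hc0, i, hi, hci⟩ := exists_word C hT
      obtain ⟨S', ⟨c', hc', hci'⟩, hdim, hdist, hrest⟩ := hS i
        ⟨puncProj F n S c, ⟨c, hc, rfl⟩, by simpa [puncProj, hi] using hci⟩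
      rw [punc_punc] at hc' hdim hdist hrest
      set S1 := S ∩ S' with hS1
      have hiS1 : i ∈ S1 := by
        obtain ⟨c'', _, rfl⟩ := hc'
        by_contra hn
        exact hci' (by simp [puncProj, hn])
      have hS1S : S1 ⊆ S := Finset.inter_subset_left
      have hlt : rk C T < rk C (T ∪ S1) := rk_lt C c hc hc0 i hiS1 hci
      have hle : rk C (T ∪ S1) ≤ rk C (T ∪ S) :=
        rk_mono C (Finset.union_subset_union_right hS1S)
      have hx1 : rk C (T ∪ S1) ≤ rk C T + r := (rk_union C T S1).trans (by
        have : rk C S1 ≤ r := hdim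
        omega)
      obtain ⟨T1, hT1, hT1', hT1r, hT1n⟩ := ih hL' S1 hrest T hlt
      have hf := hierF_small (r, δ) L ((rk C (T ∪ S1) : ℤ) - rk C T) (by omega)
        (by push_cast; omega)
      rcases hle.eq_or_lt with heq | hlt2
      · refine ⟨T1, hT1, hT1'.trans (Finset.union_subset_union_right hS1S), by omega, ?_⟩
        rw [← heq, hf]
        exact hT1n
      · have hU : T ∪ S1 ∪ S = T ∪ S := by grind
        obtain ⟨T', h1, h2, h3, h4⟩ := IH (rk C (T ∪ S1 ∪ S) - rk C (T ∪ S1))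
          (by rw [hU]; omega) (T ∪ S1) rfl (by rw [hU]; exact hlt2)
        rw [hU] at h2 h3 h4
        refine ⟨T', Finset.subset_union_left.trans h1, h2, h3, ?_⟩
        have hU1 : T1 ∪ S1 = T ∪ S1 := by
          ext j; have := @hT1 j; have := @hT1' j
          simp only [Finset.mem_union] at *
          tauto
        have hstep := nullity_step C S1 T1 δ hdist (by rw [hU1]; exact hT1r)
        rw [hU1] at hstep
        have hadd := hierF_add ((r, δ) :: L) hgood ((rk C (T ∪ S1) : ℤ) - rk C T)
          ((rk C (T ∪ S) : ℤ) - rk C (T ∪ S1))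
        rw [hf] at hadd
        have e : ((rk C (T ∪ S1) : ℤ) - rk C T) + ((rk C (T ∪ S) : ℤ) - rk C (T ∪ S1))
          = (rk C (T ∪ S) : ℤ) - rk C T := by ring
        rw [e] at hadd
        simp only [hierHd] at hadd
        linarith

theorem hierF_ofFn (m : ℕ) (k : ℕ) (r δ : ℕ → ℕ) :
    hierF (List.ofFn fun ℓ : Fin (m + 1) => (r ℓ, δ ℓ)) k
      = (∑ ℓ ∈ Finset.range m,
          (⌈(k : ℚ) / (r ℓ)⌉ - 1) * ((δ ℓ : ℤ) - (δ (ℓ + 1) : ℤ)))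
      + (⌈(k : ℚ) / (r m)⌉ - 1) * ((δ m : ℤ) - 1) := by
  induction m generalizing r δ with
  | zero => simp [hierF, hierHd]
  | succ m ih =>
    have h := ih (fun j => r (j + 1)) (fun j => δ (j + 1))
    rw [List.ofFn_succ, hierF, Finset.sum_range_succ']
    simp only [Fin.val_succ, Fin.val_zero] at h ⊢
    rw [h]
    simp only [List.ofFn_succ, hierHd, Fin.val_succ, Fin.val_zero]
    push_cast
    ring

theorem hierGood_ofFn (m : ℕ) (r δ : ℕ → ℕ) (hr : ∀ ℓ, ℓ < m + 1 → 0 < r ℓ)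
    (hδ : ∀ ℓ, ℓ + 1 < m + 1 → δ (ℓ + 1) ≤ δ ℓ) (hl : 2 ≤ δ m) :
    hierGood (List.ofFn fun ℓ : Fin (m + 1) => (r ℓ, δ ℓ)) := by
  induction m generalizing r δ with
  | zero =>
    have := hr 0 (by omega)
    simp [hierGood, hierHd]
    omega
  | succ m ih =>
    have h := ih (fun j => r (j + 1)) (fun j => δ (j + 1)) (fun ℓ hℓ => hr _ (by omega))
      (fun ℓ hℓ => hδ _ (by omega)) hl
    rw [List.ofFn_succ]
    refine ⟨hr 0 (by omega), ?_, ?_⟩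
    · simp only [List.ofFn_succ, hierHd]
      exact_mod_cast hδ 0 (by omega)
    · simpa only [Fin.val_succ] using h

end HierAux

/-- Upper bound on the minimum distance of codes with `h`-level hierarchical
locality (Theorem 4). -/
theorem minDist_le_of_hierLocality (h k d : ℕ) (hh : 1 ≤ h) (r δ : ℕ → ℕ)
    (C : Submodule F (Fin n → F))
    (hk : Module.finrank F C = k) (hkpos : 0 < k)
    (hrpos : ∀ ℓ, ℓ < h → 0 < r ℓ)
    (hrmono : ∀ ℓ, ℓ + 1 < h → r (ℓ + 1) ≤ r ℓ) (hrk : r 0 ≤ k)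
    (hδmono : ∀ ℓ, ℓ + 1 < h → δ (ℓ + 1) ≤ δ ℓ) (hδlast : 2 ≤ δ (h - 1))
    (hd : IsMinDist F n C d)
    (hloc : HasHierLocality F n C (List.ofFn fun ℓ : Fin h => (r ℓ, δ ℓ))) :
    (d : ℤ) ≤ (n : ℤ) - k + 1
      - (∑ ℓ ∈ Finset.range (h - 1),
          (⌈(k : ℚ) / (r ℓ)⌉ - 1) * ((δ ℓ : ℤ) - (δ (ℓ + 1) : ℤ)))
      - (⌈(k : ℚ) / (r (h - 1))⌉ - 1) * ((δ (h - 1) : ℤ) - 1) := by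
  obtain ⟨m, rfl⟩ : ∃ m, h = m + 1 := ⟨h - 1, by omega⟩
  simp only [Nat.add_sub_cancel] at *
  have hpu : puncture F n C Finset.univ = C := by
    have : puncProj F n Finset.univ = LinearMap.id := by
      ext c j
      simp [puncProj]
    rw [puncture, this, Submodule.map_id]
  have hru : rk C (∅ ∪ Finset.univ) = k := by
    rw [Finset.empty_union, rk, hpu, hk]
  have hr0 : rk C ∅ = 0 := by
    have hz : puncProj F n ∅ = 0 := by
      ext c j
      simp [puncProj]
    rw [rk, puncture, hz, Submodule.map_zero]
    simp
  obtain ⟨T, -, -, hT, hTn⟩ := hier_key C _ (hierGood_ofFn m r δ hrpos hδmono hδlast) Finset.univ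
    (by rw [hpu]; exact hloc) ∅ (by omega)
  rw [hru, hr0] at hTn
  rw [hru] at hT
  have hTu : T ∪ Finset.univ = ∅ ∪ Finset.univ := by ext; simp
  have hs := nullity_step C Finset.univ T d (by rw [hpu]; exact hd.2)
    (by rw [hTu, hru]; exact hT)
  rw [hTu, hru] at hs
  have hf := hierF_ofFn m k r δ
  simp only [Finset.card_univ, Fintype.card_fin, Finset.empty_union, Finset.card_empty, Nat.cast_zero, sub_zero, zero_add] at hs hTn
  rw [hf] at hTn
  linarith
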